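/- Let μ1, μ2, μ3 > 0 and let σ = (σ1, σ2, σ3) ∈ ℝ³ with σ1, σ2, σ3 ≥ 0 satisfy the Pohozaev identity for μ. If in addition 4μ_i − 2·Σ_{j=1}^{3} a_ij σ_j ≥ 0 for i = 1, 2, 3 (equivalently, (R_i σ)_i ≥ σ_i for each i, i.e. σ is minimal for the componentwise partial order), then σ = (0,0,0). -/

import Mathlib

/-- The (normalized) Cartan matrix of the affine Lie algebra `B₂⁽¹⁾`. -/
noncomputable def cartanB2 : Matrix (Fin 3) (Fin 3) ℝ :=
  !![1, 0, -1; 0, 1, -1; -1/2, -1/2, 1]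

/-- The Pohozaev identity for `μ`. -/
def Poho (μ σ : Fin 3 → ℝ) : Prop :=
  (σ 0 - σ 2) ^ 2 + (σ 1 - σ 2) ^ 2 = 4 * (μ 0 * σ 0 + μ 1 * σ 1 + 2 * μ 2 * σ 2)

/-!
Let `d = (1, 1, 2)` be the weights symmetrizing the Cartan matrix `A`. The Pohozaev identity reads
`∑ dᵢσᵢ(Aσ)ᵢ = 4 ∑ dᵢσᵢμᵢ`, while minimality says `(Aσ)ᵢ ≤ 2μᵢ`. Pairing the latter with the
nonnegative weights `dᵢσᵢ` gives `4 ∑ dᵢσᵢμᵢ ≤ 2 ∑ dᵢσᵢμᵢ`, so this sum of nonnegative terms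
vanishes.
-/

open scoped Matrix

theorem eq_zero_of_dotProduct_nonpos {ι R : Type*} [Fintype ι] [Semiring R] [PartialOrder R]
    [IsStrictOrderedRing R] {w σ : ι → R} (hw : ∀ i, 0 < w i) (hσ : ∀ i, 0 ≤ σ i)
    (h : w ⬝ᵥ σ ≤ 0) : σ = 0 := by
  have hterm : ∀ i ∈ Finset.univ, 0 ≤ w i * σ i := fun i _ => mul_nonneg (hw i).le (hσ i)
  have hsum : ∑ i, w i * σ i = 0 := h.antisymm (Finset.sum_nonneg hterm)
  funext i
  have hi : w i * σ i = 0 := (Finset.sum_eq_zero_iff_of_nonneg hterm).mp hsum i (Finset.mem_univ i)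
  by_contra hne
  exact (mul_pos (hw i) ((hσ i).lt_of_ne' hne)).ne' hi

theorem minimal_element_is_zero_general {ι R : Type*} [Fintype ι] [CommRing R] [LinearOrder R]
    [IsStrictOrderedRing R] (A : Matrix ι ι R) {d μ σ : ι → R}
    (hd : ∀ i, 0 < d i) (hμ : ∀ i, 0 < μ i) (hσ : ∀ i, 0 ≤ σ i)
    (hP : 4 * ((d * σ) ⬝ᵥ μ) ≤ (d * σ) ⬝ᵥ (A *ᵥ σ))
    (hmin : ∀ i, 0 ≤ 4 * μ i - 2 * (A *ᵥ σ) i) :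
    σ = 0 := by
  have hle : A *ᵥ σ ≤ (2 : R) • μ := fun i => by
    rw [Pi.smul_apply, smul_eq_mul]
    linarith [hmin i]
  have hpair : (d * σ) ⬝ᵥ (A *ᵥ σ) ≤ 2 * ((d * σ) ⬝ᵥ μ) :=
    calc (d * σ) ⬝ᵥ (A *ᵥ σ) ≤ (d * σ) ⬝ᵥ ((2 : R) • μ) :=
          dotProduct_le_dotProduct_of_nonneg_left hle fun i => mul_nonneg (hd i).le (hσ i)
      _ = 2 * ((d * σ) ⬝ᵥ μ) := by rw [dotProduct_smul, smul_eq_mul]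
  have hregroup : (d * μ) ⬝ᵥ σ = (d * σ) ⬝ᵥ μ :=
    Finset.sum_congr rfl fun i _ => mul_right_comm (d i) (μ i) (σ i)
  have hnonpos : (d * μ) ⬝ᵥ σ ≤ 0 := by linarith
  exact eq_zero_of_dotProduct_nonpos (fun i => mul_pos (hd i) (hμ i)) hσ hnonpos

/-- The positive weights `d` for which `diag(d) * cartanB2` is symmetric, normalized so that its
quadratic form is the left-hand side of the Pohozaev identity. -/
def symmetrizerB2 : Fin 3 → ℝ := ![1, 1, 2]

theorem symmetrizerB2_pos (i : Fin 3) : 0 < symmetrizerB2 i := by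
  fin_cases i <;> simp [symmetrizerB2]

theorem poho_iff_dotProduct_eq (μ σ : Fin 3 → ℝ) :
    Poho μ σ ↔
      (symmetrizerB2 * σ) ⬝ᵥ (cartanB2 *ᵥ σ) = 4 * ((symmetrizerB2 * σ) ⬝ᵥ μ) := by
  have hform : (symmetrizerB2 * σ) ⬝ᵥ (cartanB2 *ᵥ σ) = (σ 0 - σ 2) ^ 2 + (σ 1 - σ 2) ^ 2 := by
    simp only [dotProduct, Matrix.mulVec, Fin.sum_univ_three, Pi.mul_apply, symmetrizerB2,
      cartanB2, Matrix.of_apply, Matrix.cons_val]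
    ring
  have hmass : (symmetrizerB2 * σ) ⬝ᵥ μ = μ 0 * σ 0 + μ 1 * σ 1 + 2 * μ 2 * σ 2 := by
    simp only [dotProduct, Fin.sum_univ_three, Pi.mul_apply, symmetrizerB2, Matrix.cons_val]
    ring
  rw [hform, hmass, Poho]

/-- A componentwise-minimal nonnegative solution of the Pohozaev identity (i.e. one with
`4μ_i - 2 ∑_j a_{ij} σ_j ≥ 0` for all `i`) must be the zero vector. -/
theorem minimal_element_is_zero (μ σ : Fin 3 → ℝ)
    (hμ : ∀ i, 0 < μ i) (hσ : ∀ i, 0 ≤ σ i) (hP : Poho μ σ)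
    (hmin : ∀ i, 0 ≤ 4 * μ i - 2 * ∑ j, cartanB2 i j * σ j) :
    σ = 0 :=
  minimal_element_is_zero_general cartanB2 symmetrizerB2_pos hμ hσ
    ((poho_iff_dotProduct_eq μ σ).mp hP).ge hmin
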